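/- A right R-module M is polyform if and only if its rational hull Ẽ(M) is a polyform quasi-injective module. -/

import Mathlib

/- Right `R`-modules are rendered as left `R`-modules (i.e. we work over the
opposite ring), so "`x·r`" becomes "`r • x`". -/

/-- `A` is a dense submodule of `B` (for submodules `A ≤ B` of an ambient
module `E`). -/
def DenseIn (R : Type*) [Ring R] {E : Type*} [AddCommGroup E] [Module R E]
    (A B : Submodule R E) : Prop :=
  ∀ x ∈ B, ∀ y ∈ B, y ≠ (0 : E) → ∃ r : R, r • x ∈ A ∧ r • y ≠ 0

/-- `A` is an essential submodule of `B` (inside the ambient module `E`). -/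
def EssentialIn (R : Type*) [Ring R] {E : Type*} [AddCommGroup E] [Module R E]
    (A B : Submodule R E) : Prop :=
  ∀ P : Submodule R E, P ≤ B → P ⊓ A = ⊥ → P = ⊥

/-- `B` is polyform: every essential submodule of `B` is dense in `B`. -/
def PolyformIn (R : Type*) [Ring R] {E : Type*} [AddCommGroup E] [Module R E]
    (B : Submodule R E) : Prop :=
  ∀ A : Submodule R E, A ≤ B → EssentialIn R A B → DenseIn R A B

/-- The rational hull of `M` computed inside `E`. -/
def ratHull (R : Type*) [Ring R] (E : Type*) [AddCommGroup E] [Module R E]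
    (M : Submodule R E) : Submodule R E where
  carrier := {x | ∀ ϑ : E →ₗ[R] E, (∀ m ∈ M, ϑ m = 0) → ϑ x = 0}
  add_mem' := by
    intro a b ha hb ϑ h
    simp only [Set.mem_setOf_eq] at *
    rw [map_add, ha ϑ h, hb ϑ h, add_zero]
  zero_mem' := by
    intro ϑ _
    exact map_zero ϑ
  smul_mem' := by
    intro r x hx ϑ h
    simp only [Set.mem_setOf_eq] at *
    rw [map_smul, hx ϑ h, smul_zero]

/- If `M` is polyform and essential in `E`, then for each endomorphism `ϑ` of `E` the submodule
`M ⊓ ϑ⁻¹ M` is essential in `M`, hence dense. An endomorphism `ψ` vanishing on `M` composes with `ϑ`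
to a map vanishing on this dense submodule, hence on `M`, hence on the rational hull: so `ϑ` maps
the rational hull into itself. On the other hand `M` is dense in its rational hull, because partial
endomorphisms of `E` extend to `E`, and polyformness passes both ways along dense extensions. -/

section Extensions

variable {R E F : Type*} [Ring R] [AddCommGroup E] [Module R E] [AddCommGroup F] [Module R F]
variable {A A' B B' C : Submodule R E}

theorem EssentialIn.exists_smul_mem_smul_ne_zero (h : EssentialIn R A B) {y : E} (hy : y ∈ B)
    (hy0 : y ≠ 0) : ∃ r : R, r • y ∈ A ∧ r • y ≠ 0 := by
  by_contra! hcon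
  have hbot : Submodule.span R {y} ⊓ A = ⊥ := by
    rw [eq_bot_iff]
    rintro z ⟨hz, hzA⟩
    obtain ⟨r, rfl⟩ := Submodule.mem_span_singleton.1 hz
    exact hcon r hzA
  have hspan : Submodule.span R {y} ≤ B := (Submodule.span_singleton_le_iff_mem y B).2 hy
  exact hy0 (Submodule.span_singleton_eq_bot.1 (h _ hspan hbot))

theorem EssentialIn.trans (hAB : EssentialIn R A B) (hBC : EssentialIn R B C) (hle : A ≤ B) :
    EssentialIn R A C := fun P hP hPA =>
  hBC P hP (hAB (P ⊓ B) inf_le_right (by rw [inf_assoc, inf_eq_right.2 hle, hPA]))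

theorem EssentialIn.inf_right (h : EssentialIn R A C) (hB : B ≤ C) : EssentialIn R (A ⊓ B) B :=
  fun P hP hPA => h P (hP.trans hB) (by rw [← hPA, inf_left_comm, inf_eq_left.2 hP, inf_comm])

theorem EssentialIn.comap {D : Submodule R F} (h : EssentialIn R D ⊤) (f : E →ₗ[R] F) :
    EssentialIn R (D.comap f) ⊤ := by
  intro P _ hP
  have hmap : P.map f = ⊥ :=
    h _ le_top (by rw [Submodule.map_inf_eq_map_inf_comap, hP, Submodule.map_bot])
  have hle : P ≤ D.comap f := Submodule.map_le_iff_le_comap.1 (hmap.trans_le bot_le)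
  rw [← hP, inf_eq_left.2 hle]

theorem DenseIn.mono (h : DenseIn R A B) (hA : A ≤ A') (hB : B' ≤ B) : DenseIn R A' B' :=
  fun x hx y hy hy0 => (h x (hB hx) y (hB hy) hy0).imp fun _ => And.imp_left (@hA _)

theorem DenseIn.essentialIn (h : DenseIn R A B) : EssentialIn R A B := by
  intro P hP hPA
  rw [Submodule.eq_bot_iff]
  intro y hy
  by_contra hy0
  obtain ⟨r, hrA, hr0⟩ := h y (hP hy) y (hP hy) hy0
  exact hr0 ((Submodule.eq_bot_iff _).1 hPA _ ⟨P.smul_mem r hy, hrA⟩)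

theorem DenseIn.trans (hAB : DenseIn R A B) (hBC : DenseIn R B C) : DenseIn R A C := by
  intro x hx y hy hy0
  obtain ⟨r, hrx, hry⟩ := hBC x hx y hy hy0
  obtain ⟨s, hsB, hs0⟩ :=
    hBC.essentialIn.exists_smul_mem_smul_ne_zero (C.smul_mem r hy) hry
  obtain ⟨t, htA, ht0⟩ := hAB (s • r • x) (B.smul_mem s hrx) (s • r • y) hsB hs0
  exact ⟨t * s * r, by simpa only [mul_smul] using htA, by simpa only [mul_smul] using ht0⟩

theorem DenseIn.map_eq_zero (hAB : DenseIn R A B) (hB : EssentialIn R B ⊤) {f : E →ₗ[R] E}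
    (hf : ∀ a ∈ A, f a = 0) {x : E} (hx : x ∈ B) : f x = 0 := by
  by_contra hfx
  obtain ⟨s, hsB, hs0⟩ := hB.exists_smul_mem_smul_ne_zero Submodule.mem_top hfx
  obtain ⟨r, hrA, hr0⟩ := hAB (s • x) (B.smul_mem s hx) (s • f x) hsB hs0
  exact hr0 (by rw [← map_smul, ← map_smul, hf _ hrA])

theorem DenseIn.polyformIn_iff (h : DenseIn R A B) (hle : A ≤ B) :
    PolyformIn R A ↔ PolyformIn R B := by
  constructor
  · intro hA D _ hDB
    have hDA : DenseIn R (D ⊓ A) A := hA (D ⊓ A) inf_le_right (hDB.inf_right hle)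
    exact (hDA.trans h).mono inf_le_left le_rfl
  · intro hB D hD hDA
    exact (hB D (hD.trans hle) (hDA.trans h.essentialIn hD)).mono le_rfl hle

end Extensions

section RationalHull

/-- `E` is quasi-injective, in the form that does not mention an injective hull of `E`: every
homomorphism from a submodule of `E` to `E` extends to an endomorphism of `E`. It is the property of
an injective module that makes submodules dense in their rational hulls. -/
def QuasiInjective (R E : Type*) [Ring R] [AddCommGroup E] [Module R E] : Prop :=
  ∀ (N : Submodule R E) (f : N →ₗ[R] E), ∃ g : E →ₗ[R] E, ∀ x : N, g x = f x

variable {R E : Type*} [Ring R] [AddCommGroup E] [Module R E] {M : Submodule R E}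

theorem quasiInjective_of_injective (hE : Module.Injective R E) : QuasiInjective R E :=
  fun N f => hE.out N.subtype N.injective_subtype f

theorem QuasiInjective.exists_map_eq (hE : QuasiInjective R E) {x y : E}
    (h : ∀ r : R, r • x ∈ M → r • y = 0) :
    ∃ ϑ : E →ₗ[R] E, (∀ m ∈ M, ϑ m = 0) ∧ ϑ x = y := by
  let zeroOnM : E →ₗ.[R] E := ⟨M, 0⟩
  let onSpan : E →ₗ.[R] E := .mkSpanSingleton' x y fun r hr => h r (hr ▸ M.zero_mem)
  have hagree : ∀ (m : zeroOnM.domain) (z : onSpan.domain),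
      (m : E) = z → zeroOnM m = onSpan z := by
    rintro ⟨m, hm⟩ ⟨z, hz⟩ (rfl : m = z)
    obtain ⟨r, rfl⟩ := Submodule.mem_span_singleton.1 hz
    have hval : onSpan ⟨r • x, hz⟩ = r • y := LinearPMap.mkSpanSingleton'_apply x y _ r hz
    exact (h r hm).symm.trans hval.symm
  obtain ⟨ϑ, hϑ⟩ := hE _ (zeroOnM.sup onSpan hagree).toFun
  refine ⟨ϑ, fun m hm => ?_, ?_⟩
  · have hle := LinearPMap.left_le_sup zeroOnM onSpan hagree
    exact (hϑ ⟨m, hle.1 hm⟩).trans (hle.2 (x := ⟨m, hm⟩) rfl).symm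
  · have hle := LinearPMap.right_le_sup zeroOnM onSpan hagree
    have hx : x ∈ onSpan.domain := Submodule.mem_span_singleton_self x
    calc ϑ x = onSpan ⟨x, hx⟩ := (hϑ ⟨x, hle.1 hx⟩).trans (hle.2 (x := ⟨x, hx⟩) rfl).symm
      _ = y := LinearPMap.mkSpanSingleton'_apply_self x y _ hx

theorem le_ratHull (M : Submodule R E) : M ≤ ratHull R E M :=
  fun x hx _ h => h x hx

theorem denseIn_ratHull (hE : QuasiInjective R E) (M : Submodule R E) :
    DenseIn R M (ratHull R E M) := by
  intro x hx y _ hy0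
  by_contra! hcon
  obtain ⟨ϑ, hϑM, rfl⟩ := hE.exists_map_eq hcon
  exact hy0 (hx ϑ hϑM)

theorem PolyformIn.map_mem_ratHull (hM : PolyformIn R M) (hess : EssentialIn R M ⊤)
    (ϑ : E →ₗ[R] E) {x : E} (hx : x ∈ ratHull R E M) : ϑ x ∈ ratHull R E M := by
  intro ψ hψ
  have hdense : DenseIn R (M.comap ϑ ⊓ M) M :=
    hM _ inf_le_right ((hess.comap ϑ).inf_right le_top)
  have hzero : ∀ m ∈ M, (ψ ∘ₗ ϑ) m = 0 := fun m hm =>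
    hdense.map_eq_zero hess (fun a ha => hψ (ϑ a) ha.1) hm
  exact hx (ψ ∘ₗ ϑ) hzero

end RationalHull

theorem stmt18_general (R : Type*) [Ring R] (E : Type*) [AddCommGroup E] [Module R E]
    (M : Submodule R E) (hE : QuasiInjective R E) (hess : EssentialIn R M ⊤) :
    PolyformIn R M ↔
      (PolyformIn R (ratHull R E M) ∧
        ∀ ϑ : E →ₗ[R] E, ∀ x ∈ ratHull R E M, ϑ x ∈ ratHull R E M) := by
  have hiff : PolyformIn R M ↔ PolyformIn R (ratHull R E M) :=
    (denseIn_ratHull hE M).polyformIn_iff (le_ratHull M)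
  exact ⟨fun hM => ⟨hiff.1 hM, fun ϑ _ hx => hM.map_mem_ratHull hess ϑ hx⟩,
    fun h => hiff.2 h.1⟩

/-- Let `E` be an injective hull of `M ≤ E` (then `E` is also
an injective hull of `Ẽ(M)`). Then `M` is polyform iff `Ẽ(M)` is a polyform
quasi-injective module. -/
theorem stmt18 (R : Type*) [Ring R] (E : Type*) [AddCommGroup E] [Module R E]
    (M : Submodule R E) (hE : Module.Injective R E)
    (hess : ∀ N : Submodule R E, N ⊓ M = ⊥ → N = ⊥) :
    PolyformIn R M ↔
      (PolyformIn R (ratHull R E M) ∧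
        ∀ ϑ : E →ₗ[R] E, ∀ x ∈ ratHull R E M, ϑ x ∈ ratHull R E M) := by
  exact stmt18_general R E M (quasiInjective_of_injective hE) fun N _ => hess N
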